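/- For every n ≥ 5, a set S of vertices of the cycle graph C_n is an ERR:LD set of C_n if and only if S is the entire vertex set of C_n. In particular, the minimum cardinality of an ERR:LD set of C_n is n. -/

import Mathlib

open scoped symmDiff

variable {V : Type*}

/-- The closed neighborhood `N[v]` of a vertex. -/
def closedNbhd (G : SimpleGraph V) (v : V) : Set V := insert v (G.neighborSet v)

/-- `S` is an error-correcting locating-dominating (ERR:LD) set: conditions (i)-(iv). -/
def IsErrLD (G : SimpleGraph V) (S : Set V) : Prop :=
  (∀ v : V, 3 ≤ (closedNbhd G v ∩ S).encard) ∧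
  (∀ v ∈ S, ∀ u ∈ S, u ≠ v →
    1 ≤ ((((G.neighborSet v ∩ S) ∆ (G.neighborSet u ∩ S)) \ {v, u}).encard)) ∧
  (∀ v ∉ S, ∀ u ∈ S,
    2 ≤ ((((G.neighborSet v ∩ S) ∆ (G.neighborSet u ∩ S)) \ {u}).encard)) ∧
  (∀ v ∉ S, ∀ u ∉ S, u ≠ v →
    3 ≤ (((G.neighborSet v ∩ S) ∆ (G.neighborSet u ∩ S)).encard))

/-- The cycle graph `C_n` on vertex set `ZMod n`, `i` adjacent to `i ± 1`. -/
def cycleGraph (n : ℕ) : SimpleGraph (ZMod n) :=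
  SimpleGraph.fromRel (fun i j => j = i + 1)

theorem cyc_ne_zero (n : ℕ) (hn : 5 ≤ n) (k : ℕ) (h0 : 0 < k) (h4 : k ≤ 4) :
    (k : ZMod n) ≠ 0 := by
  intro h
  rw [ZMod.natCast_eq_zero_iff] at h
  exact absurd (Nat.le_of_dvd h0 h) (by omega)

theorem cyc_nbhd (n : ℕ) (hn : 5 ≤ n) (v : ZMod n) :
    (cycleGraph n).neighborSet v = {v + 1, v - 1} := by
  have h1 : (1 : ZMod n) ≠ 0 := by simpa using cyc_ne_zero n hn 1 (by norm_num) (by norm_num)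
  ext w
  simp only [SimpleGraph.mem_neighborSet, cycleGraph, SimpleGraph.fromRel_adj,
    Set.mem_insert_iff, Set.mem_singleton_iff]
  constructor
  · rintro ⟨_, h | h⟩
    · exact Or.inl h
    · right; rw [h]; ring
  · rintro (h | h)
    · exact ⟨by rw [h]; simpa using h1, Or.inl h⟩
    · refine ⟨?_, Or.inr (by rw [h]; ring)⟩
      intro e
      apply h1
      linear_combination e + h

theorem cyc_univ (n : ℕ) (hn : 5 ≤ n) : IsErrLD (cycleGraph n) Set.univ := by
  have h1 : (1 : ZMod n) ≠ 0 := by simpa using cyc_ne_zero n hn 1 (by norm_num) (by norm_num)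
  have h2 : (2 : ZMod n) ≠ 0 := by simpa using cyc_ne_zero n hn 2 (by norm_num) (by norm_num)
  have h3 : (3 : ZMod n) ≠ 0 := by simpa using cyc_ne_zero n hn 3 (by norm_num) (by norm_num)
  have h4 : (4 : ZMod n) ≠ 0 := by simpa using cyc_ne_zero n hn 4 (by norm_num) (by norm_num)
  have e1 : ∀ v : ZMod n, v + 1 ≠ v := fun v e => h1 (by linear_combination e)
  have e2 : ∀ v : ZMod n, v - 1 ≠ v := fun v e => h1 (by linear_combination -e)
  have e3 : ∀ v : ZMod n, v + 1 ≠ v - 1 := fun v e => h2 (by linear_combination e)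
  refine ⟨?_, ?_, by simp, by simp⟩
  · intro v
    rw [closedNbhd, cyc_nbhd n hn, Set.inter_univ]
    apply le_of_eq
    symm
    rw [Set.encard_eq_three]
    exact ⟨v, v + 1, v - 1, (e1 v).symm, (e2 v).symm, e3 v, rfl⟩
  · intro v _ u _ huv
    rw [Set.one_le_encard_iff_nonempty, cyc_nbhd n hn, cyc_nbhd n hn]
    simp only [Set.inter_univ]
    have a1 := e1 v
    have a2 := e2 v
    have a3 := e3 v
    by_cases ha : v + 1 = u ∨ v + 1 = u - 1
    · refine ⟨v - 1, ?_⟩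
      simp only [Set.mem_sdiff, Set.mem_symmDiff, Set.mem_insert_iff, Set.mem_singleton_iff]
      grind
    · refine ⟨v + 1, ?_⟩
      simp only [Set.mem_sdiff, Set.mem_symmDiff, Set.mem_insert_iff, Set.mem_singleton_iff]
      grind

theorem cyc_eq_univ (n : ℕ) (hn : 5 ≤ n) (S : Set (ZMod n)) (h : IsErrLD (cycleGraph n) S) :
    S = Set.univ := by
  rw [Set.eq_univ_iff_forall]
  intro v
  by_contra hv
  have h3 := h.1 v
  rw [closedNbhd, cyc_nbhd n hn] at h3
  have hs : (insert v {v + 1, v - 1} : Set (ZMod n)) ∩ S ⊆ {v + 1, v - 1} := by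
    rintro w ⟨rfl | hw, hS⟩
    · exact absurd hS hv
    · exact hw
  have := h3.trans ((Set.encard_le_encard hs).trans (Set.encard_insert_le _ _))
  rw [Set.encard_singleton] at this
  exact absurd this (by decide)

theorem errLD_cycle (n : ℕ) (hn : 5 ≤ n) :
    (∀ S : Set (ZMod n), IsErrLD (cycleGraph n) S ↔ S = Set.univ) ∧
    (∃ S : Set (ZMod n), IsErrLD (cycleGraph n) S ∧ S.ncard = n) ∧
    (∀ S : Set (ZMod n), IsErrLD (cycleGraph n) S → n ≤ S.ncard) := by
  have hc : (Set.univ : Set (ZMod n)).ncard = n := by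
    rw [Set.ncard_univ, Nat.card_zmod]
  refine ⟨fun S => ⟨cyc_eq_univ n hn S, ?_⟩, ⟨Set.univ, cyc_univ n hn, hc⟩, ?_⟩
  · rintro rfl
    exact cyc_univ n hn
  · intro S h
    rw [cyc_eq_univ n hn S h, hc]
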